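/- In the field $\mathbb{Q}(L)$ of rational functions in one variable $L$ over $\mathbb{Q}$, define $b_O(2m) = L^{-m^2 + 2m} \prod_{i=1}^{m} (L^{2i} - 1)^{-1}$ and $b_O(2m+1) = L^{-m^2} \prod_{i=1}^{m} (L^{2i} - 1)^{-1}$ for all $m \geq 0$ (so $b_O(0) = b_O(1) = 1$). Then for every $n \geq 2$ the recursion $(L^n - 1)\, b_O(n) = (L - 1)\, b_O(n-1) + L^{2-n}\, b_O(n-2)$ holds. -/

import Mathlib

/-!
Write `P_m = ∏_{i=1}^m (L^{2i} - 1)⁻¹`, so that `(L^{2m+2} - 1) P_{m+1} = P_m` (`bO_prod_succ`).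
In both parities this relation reduces the recursion to an identity between powers of `L`.
For `n = 2m + 2` both sides equal `L^{1-m²} P_m`, since `-(m+1)² + 2(m+1) = 1 - m²` and
`L^{-2m} L^{-m²+2m} = L^{-m²}`. For `n = 2m + 3`, put `k = m + 1`; replacing `P_m` by
`(L^{2k} - 1) P_k` and dividing by `L^{-k²} P_k` leaves
`L^{2k+1} - 1 = (L - 1) L^{2k} + (L^{2k} - 1)`.
-/

noncomputable section

/-- The motivic-class formula for `B O_n` as a rational function in `L`:
`b_O(2m) = L^{-m²+2m} ∏_{i=1}^{m} (L^{2i}-1)⁻¹` and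
`b_O(2m+1) = L^{-m²} ∏_{i=1}^{m} (L^{2i}-1)⁻¹`. -/
def bO : ℕ → RatFunc ℚ := fun n =>
  if n % 2 = 0 then
    (RatFunc.X : RatFunc ℚ) ^ (-((n / 2 : ℕ) : ℤ) ^ 2 + 2 * ((n / 2 : ℕ) : ℤ))
      * ∏ i ∈ Finset.Icc 1 (n / 2), ((RatFunc.X : RatFunc ℚ) ^ (2 * i) - 1)⁻¹
  else
    (RatFunc.X : RatFunc ℚ) ^ (-((n / 2 : ℕ) : ℤ) ^ 2)
      * ∏ i ∈ Finset.Icc 1 (n / 2), ((RatFunc.X : RatFunc ℚ) ^ (2 * i) - 1)⁻¹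

/-- `L` is not a root of unity in `ℚ(L)`, so the factors inverted in `bO` are nonzero. -/
theorem X_pow_sub_one_ne_zero {k : ℕ} (hk : k ≠ 0) :
    (RatFunc.X : RatFunc ℚ) ^ k - 1 ≠ 0 := by
  have h : (Polynomial.X ^ k - 1 : Polynomial ℚ) ≠ 0 := by
    simpa using Polynomial.X_pow_sub_C_ne_zero (Nat.pos_of_ne_zero hk) (1 : ℚ)
  simpa using (RatFunc.algebraMap_ne_zero h : algebraMap (Polynomial ℚ) (RatFunc ℚ) _ ≠ 0)

theorem bO_prod_succ (m : ℕ) :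
    ∏ i ∈ Finset.Icc 1 m, ((RatFunc.X : RatFunc ℚ) ^ (2 * i) - 1)⁻¹
      = ((RatFunc.X : RatFunc ℚ) ^ (2 * (m + 1)) - 1)
        * ∏ i ∈ Finset.Icc 1 (m + 1), ((RatFunc.X : RatFunc ℚ) ^ (2 * i) - 1)⁻¹ := by
  have h := X_pow_sub_one_ne_zero (k := 2 * (m + 1)) (by omega)
  rw [Finset.prod_Icc_succ_top (by omega), mul_left_comm, mul_inv_cancel₀ h, mul_one]

theorem bO_even (m : ℕ) : bO (2 * m) =
    (RatFunc.X : RatFunc ℚ) ^ (-(m : ℤ) ^ 2 + 2 * (m : ℤ))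
      * ∏ i ∈ Finset.Icc 1 m, ((RatFunc.X : RatFunc ℚ) ^ (2 * i) - 1)⁻¹ := by
  have h : 2 * m / 2 = m := by omega
  simp only [bO, h, Nat.mul_mod_right, if_true]

theorem bO_odd (m : ℕ) : bO (2 * m + 1) =
    (RatFunc.X : RatFunc ℚ) ^ (-(m : ℤ) ^ 2)
      * ∏ i ∈ Finset.Icc 1 m, ((RatFunc.X : RatFunc ℚ) ^ (2 * i) - 1)⁻¹ := by
  have h : (2 * m + 1) / 2 = m := by omega
  have hodd : ¬ (2 * m + 1) % 2 = 0 := by omega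
  simp only [bO, h, if_neg hodd]

/-- STATEMENT 12: for every `n ≥ 2`, the recursion
`(L^n - 1) b_O(n) = (L - 1) b_O(n-1) + L^{2-n} b_O(n-2)` holds in `ℚ(L)`. -/
theorem bO_recursion :
    ∀ n : ℕ, 2 ≤ n →
      ((RatFunc.X : RatFunc ℚ) ^ n - 1) * bO n
        = ((RatFunc.X : RatFunc ℚ) - 1) * bO (n - 1)
          + (RatFunc.X : RatFunc ℚ) ^ ((2 : ℤ) - (n : ℤ)) * bO (n - 2) := by
  intro n hn
  have hX : (RatFunc.X : RatFunc ℚ) ≠ 0 := RatFunc.X_ne_zero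
  obtain ⟨m, rfl | rfl⟩ : ∃ m, n = 2 * (m + 1) ∨ n = 2 * (m + 1) + 1 :=
    ⟨n / 2 - 1, by omega⟩
  · rw [show 2 * (m + 1) - 1 = 2 * m + 1 by omega, show 2 * (m + 1) - 2 = 2 * m by omega,
      bO_even, bO_even, bO_odd, mul_left_comm, ← bO_prod_succ, ← mul_assoc (_ ^ _) (_ ^ _),
      ← zpow_add₀ hX,
      show (2 : ℤ) - ((2 * (m + 1) : ℕ) : ℤ) + (-(m : ℤ) ^ 2 + 2 * (m : ℤ)) = -(m : ℤ) ^ 2 by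
        push_cast; ring,
      show -((m + 1 : ℕ) : ℤ) ^ 2 + 2 * ((m + 1 : ℕ) : ℤ) = -(m : ℤ) ^ 2 + 1 by
        push_cast; ring,
      zpow_add_one₀ hX]
    ring
  · rw [show 2 * (m + 1) + 1 - 1 = 2 * (m + 1) by omega,
      show 2 * (m + 1) + 1 - 2 = 2 * m + 1 by omega,
      bO_even, bO_odd, bO_odd, bO_prod_succ m, ← mul_assoc (_ ^ _) (_ ^ _), ← zpow_add₀ hX,
      show (2 : ℤ) - ((2 * (m + 1) + 1 : ℕ) : ℤ) + -(m : ℤ) ^ 2 = -((m + 1 : ℕ) : ℤ) ^ 2 by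
        push_cast; ring,
      zpow_add₀ hX (-((m + 1 : ℕ) : ℤ) ^ 2),
      show (2 : ℤ) * ((m + 1 : ℕ) : ℤ) = ((2 * (m + 1) : ℕ) : ℤ) by push_cast; ring,
      zpow_natCast, pow_succ]
    ring
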